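/- arXiv:1501.02071 — 2 statements merged into one kernel-verified Lean document; each statement's English description precedes it below -/
import Mathlib

section
/- There exists a function f : ℕ × ℕ → ℕ with the following property: for every prime p, every natural number n ≥ 1, every finite p-group P acted on by automorphisms by a cyclic group ⟨φ⟩ of order p^n, every prime q ≠ p, and every finite faithful module V over the prime field 𝔽_q for the semidirect product P ⋊ ⟨φ⟩, the derived length of the subgroup [P, φ^{p^{n-1}}] is at most f(|C_V(φ)|, p^n). -/
/-- The subgroup `[P, ψ]` generated by all commutators `x⁻¹ · ψ(x)`. -/
def commutatorWithAut {P : Type*} [Group P] (ψ : MulAut P) : Subgroup P :=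
  Subgroup.closure {y : P | ∃ x : P, y = x⁻¹ * ψ x}

open Module

theorem aux_derived_card {G : Type*} [Group G] [Finite G] [Group.IsSolvable G] (D : ℕ)
    (hD : Nat.card G ≤ D) : derivedSeries G D = ⊥ := by
  have key : ∀ n, derivedSeries G n = ⊥ ∨ Nat.card (derivedSeries G n) + n ≤ Nat.card G := by
    intro n
    induction n with
    | zero => right; simp
    | succ n ih =>
      by_cases h0 : derivedSeries G n = ⊥
      · left
        rw [derivedSeries_succ, h0, Subgroup.commutator_bot_left]
      · rcases ih with h | h
        · exact absurd h h0
        · right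
          have h1 : derivedSeries G (n + 1) < derivedSeries G n := by
            rw [derivedSeries_succ]
            exact Group.IsSolvable.commutator_lt_of_ne_bot h0
          have h2 : Nat.card (derivedSeries G (n + 1)) < Nat.card (derivedSeries G n) :=
            Set.Finite.card_lt_card (Set.toFinite _) h1
          omega
  rcases key D with h | h
  · exact h
  · have : 0 < Nat.card (derivedSeries G D) := Nat.card_pos
    omega

theorem aux_self_centralizing {p : ℕ} [Fact p.Prime] {G : Type*} [Group G] [Finite G]
    (hG : IsPGroup p G) :
    ∃ A : Subgroup G, A.Normal ∧ (∀ a ∈ A, ∀ b ∈ A, a * b = b * a) ∧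
      ∀ g, (∀ a ∈ A, g * a = a * g) → g ∈ A := by
  obtain ⟨A, hA⟩ : ∃ A, Maximal
      (fun A : Subgroup G => A.Normal ∧ (∀ a ∈ A, ∀ b ∈ A, a * b = b * a)) A := by
    apply Set.Finite.exists_maximal (Set.toFinite _)
    refine ⟨⊥, inferInstance, ?_⟩
    simp
  obtain ⟨hAn, hAc⟩ := hA.prop
  refine ⟨A, hAn, hAc, ?_⟩
  by_contra! hcon
  obtain ⟨g0, hg0, hg0A⟩ := hcon
  -- the image of the centralizer in the quotient
  let C : Subgroup G := Subgroup.centralizer (A : Set G)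
  have hCn : C.Normal := by
    infer_instance
  let Cb : Subgroup (G ⧸ A) := C.map (QuotientGroup.mk' A)
  have hCbn : Cb.Normal := hCn.map _ (QuotientGroup.mk'_surjective A)
  have hQ : IsPGroup p (G ⧸ A) := hG.to_quotient A
  have hnt : Nontrivial Cb := by
    rw [Subgroup.nontrivial_iff_exists_ne_one]
    refine ⟨QuotientGroup.mk' A g0, ⟨g0, ?_, rfl⟩, ?_⟩
    · intro a ha
      exact (hg0 a ha).symm
    · simpa using hg0A
  -- conjugation action
  have hconj : IsPGroup p (ConjAct (G ⧸ A)) := hQ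
  obtain ⟨y, hy1, hyC, hyc⟩ : ∃ y : G ⧸ A, y ≠ 1 ∧ y ∈ Cb ∧ ∀ w, w * y = y * w := by
    have hdvd : p ∣ Nat.card Cb := by
      obtain ⟨n, hn⟩ := (hQ.to_subgroup Cb).exists_card_eq
      rw [hn]
      apply dvd_pow_self
      rintro rfl
      have := Finite.one_lt_card (α := Cb)
      rw [hn] at this
      simp at this
    have h1 : (1 : Cb) ∈ MulAction.fixedPoints (ConjAct (G ⧸ A)) Cb := by
      intro w; simp
    obtain ⟨b, hb, hb1⟩ := hconj.exists_fixed_point_of_prime_dvd_card_of_fixed_point Cb hdvd h1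
    refine ⟨b, ?_, b.2, ?_⟩
    · intro h; apply hb1; ext; simp [h]
    · intro w
      have := congrArg Subtype.val (hb (ConjAct.toConjAct w))
      rw [ConjAct.Subgroup.val_conj_smul, ConjAct.toConjAct_smul] at this
      exact mul_inv_eq_iff_eq_mul.1 this
  obtain ⟨x, hxC, rfl⟩ := hyC
  let B : Subgroup G := (Subgroup.zpowers (QuotientGroup.mk' A x)).comap (QuotientGroup.mk' A)
  have hmem : ∀ b ∈ B, ∃ i : ℤ, ∃ a ∈ A, b = x ^ i * a := by
    rintro b ⟨i, hi⟩
    refine ⟨i, (x ^ i)⁻¹ * b, ?_, by group⟩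
    have : (QuotientGroup.mk' A) (x ^ i) = QuotientGroup.mk' A b := by simpa using hi
    exact (QuotientGroup.mk'_eq_mk' A).1 this |>.elim (fun z hz => by
      rw [← hz.2]; simpa using hz.1)
  have hxa : ∀ a ∈ A, Commute x a := fun a ha => ((hxC a ha)).symm
  have hB : B.Normal ∧ (∀ a ∈ B, ∀ b ∈ B, a * b = b * a) := by
    constructor
    · have : (Subgroup.zpowers (QuotientGroup.mk' A x)).Normal := by
        constructor
        rintro _ ⟨i, rfl⟩ g
        have : Commute g ((QuotientGroup.mk' A x) ^ i) := Commute.zpow_right (hyc g) i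
        refine ⟨i, ?_⟩
        simp only
        rw [this.eq]; group
      exact this.comap _
    · intro b hb c hc
      obtain ⟨i, a, ha, rfl⟩ := hmem b hb
      obtain ⟨j, a', ha', rfl⟩ := hmem c hc
      have h1 : Commute a a' := hAc a ha a' ha'
      have h2 : Commute (x ^ i) (x ^ j) := (Commute.refl x).zpow_zpow i j
      have h3 : Commute (x ^ i) a' := (hxa a' ha').zpow_left i
      have h4 : Commute (x ^ j) a := (hxa a ha).zpow_left j
      exact ((h2.mul_right h3).mul_left (h4.symm.mul_right h1)).eq
  have hle : A ≤ B := by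
    intro a ha
    refine ⟨0, ?_⟩
    simpa using ((QuotientGroup.eq_one_iff a).2 ha).symm
  have := hA.le_of_ge hB hle
  apply hy1
  have hx : x ∈ A := this ⟨1, by simp⟩
  simpa using hx

theorem aux_perm {p : ℕ} [Fact p.Prime] {G : Type*} [Group G] [Finite G]
    (hG : IsPGroup p G) {X : Type*} [Finite X] [MulAction G X] (z : G) (s : ℕ)
    (hs : Nat.card {x : X // z • x ≠ x} ≤ s) (M : ℕ) (hM : p * (s + 1) ≤ M) (x : X) :
    (derivedSeries (Subgroup.normalClosure {z}) (M.factorial)).map (Subgroup.subtype _) ≤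
      MulAction.stabilizer G x := by
  set H := MulAction.stabilizer G x with hH
  -- choose the subgroup L
  obtain ⟨L, hHL, hidx, hL⟩ : ∃ L : Subgroup G, H ≤ L ∧ H.relIndex L ≤ M ∧
      (L = ⊤ ∨ s < H.relIndex L) := by
    have hp := (Fact.out : p.Prime)
    obtain ⟨a, ha⟩ := hG.exists_card_eq
    obtain ⟨b, hb⟩ := (hG.to_subgroup H).exists_card_eq
    -- the least power exceeding s
    let j := Nat.clog p (s + 1)
    have hj1 : s < p ^ j := Nat.le_pow_clog hp.one_lt _
    have hj2 : p ^ j ≤ M := by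
      refine le_trans ?_ hM
      rcases Nat.eq_zero_or_pos j with h | h
      · rw [h]; simp; exact Nat.mul_pos hp.pos (by omega)
      · obtain ⟨i, hi⟩ : ∃ i, j = i + 1 := ⟨j - 1, by omega⟩
        rw [hi, pow_succ']
        apply Nat.mul_le_mul_left
        by_contra! hlt
        have : Nat.clog p (s + 1) ≤ i := Nat.clog_le_of_le_pow hlt.le
        omega
    have hba : b ≤ a := by
      have := Subgroup.card_subgroup_dvd_card H
      rw [ha, hb] at this
      exact (Nat.pow_dvd_pow_iff_le_right hp.one_lt).1 this
    by_cases hja : b + j ≤ a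
    · obtain ⟨L, hLc, hHL⟩ := Sylow.exists_subgroup_card_pow_prime_le p (n := b) (m := b + j)
        (by rw [ha]; exact pow_dvd_pow p hja) H hb (by omega)
      have hr : H.relIndex L = p ^ j := by
        have h1 := (H.subgroupOf L).index_mul_card
        rw [Nat.card_congr (Subgroup.subgroupOfEquivOfLe hHL).toEquiv, hLc, hb, pow_add,
          mul_comm] at h1
        exact Nat.eq_of_mul_eq_mul_left (pow_pos hp.pos b) h1
      exact ⟨L, hHL, by omega, Or.inr (by omega)⟩
    · refine ⟨⊤, le_top, ?_, Or.inl rfl⟩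
      rw [Subgroup.relIndex_top_right]
      have h1 := H.index_mul_card
      rw [ha, hb] at h1
      have h2 : H.index = p ^ (a - b) := by
        apply Nat.eq_of_mul_eq_mul_right (pow_pos hp.pos b)
        rw [h1, ← pow_add]; congr 1; omega
      rw [h2]
      exact (Nat.pow_le_pow_right hp.pos (by omega)).trans hj2
  -- N ≤ L
  have hNL : Subgroup.normalClosure {z} ≤ L := by
    rcases hL with rfl | hL
    · exact le_top
    rw [Subgroup.normalClosure, Subgroup.closure_le]
    intro w hw
    rw [Group.mem_conjugatesOfSet_iff] at hw
    obtain ⟨z', hz', hc⟩ := hw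
    rw [Set.mem_singleton_iff] at hz'
    subst hz'
    obtain ⟨g, rfl⟩ := isConj_iff.1 hc
    by_contra hgL
    let F : (L ⧸ H.subgroupOf L) → {x : X // z' • x ≠ x} := fun l =>
      ⟨g⁻¹ • (l.out : G) • x, by
        intro h
        apply hgL
        have h1 : (l.out : G)⁻¹ * (g * z' * g⁻¹) * (l.out : G) ∈ H := by
          apply MulAction.mem_stabilizer_iff.2
          simp only [mul_smul]
          rw [h]; simp
        have h2 := L.mul_mem (L.mul_mem (l.out).2 (hHL h1)) (L.inv_mem (l.out).2)
        simpa [mul_assoc] using h2⟩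
    have hF : Function.Injective F := by
      intro l l' h
      have h1 : g⁻¹ • (l.out : G) • x = g⁻¹ • (l'.out : G) • x := congrArg Subtype.val h
      rw [smul_left_cancel_iff] at h1
      rw [← QuotientGroup.out_eq' l, ← QuotientGroup.out_eq' l', QuotientGroup.eq]
      rw [Subgroup.mem_subgroupOf]
      apply MulAction.mem_stabilizer_iff.2
      simp [mul_smul, ← h1]
    have := Nat.card_le_card_of_injective F hF
    have h3 : H.relIndex L = Nat.card (L ⧸ H.subgroupOf L) := rfl
    omega
  -- action of L
  have hker : derivedSeries L M.factorial ≤ H.subgroupOf L := by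
    let θ := MulAction.toPermHom L (L ⧸ H.subgroupOf L)
    have hsol : Group.IsSolvable θ.range := by
      have : IsPGroup p θ.range := ((hG.to_subgroup L)).of_surjective θ.rangeRestrict
        θ.rangeRestrict_surjective
      have := this.isNilpotent
      infer_instance
    have hcard : Nat.card θ.range ≤ M.factorial := by
      calc Nat.card θ.range ≤ Nat.card (Equiv.Perm (L ⧸ H.subgroupOf L)) :=
            Subgroup.card_le_card_group _
        _ = (Nat.card (L ⧸ H.subgroupOf L)).factorial := Nat.card_perm
        _ ≤ _ := Nat.factorial_le hidx
    have h1 := aux_derived_card _ hcard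
    have h2 := map_derivedSeries_le_derivedSeries θ.rangeRestrict M.factorial
    rw [h1, le_bot_iff, Subgroup.map_eq_bot_iff, MonoidHom.ker_rangeRestrict] at h2
    intro l hl
    have h3 : θ l = 1 := h2 hl
    have h4 : θ l ((1 : L) : L ⧸ H.subgroupOf L) = ((1 : L) : L ⧸ H.subgroupOf L) := by
      rw [h3]; rfl
    have h5 : ((l * 1 : L) : L ⧸ H.subgroupOf L) = ((1 : L) : L ⧸ H.subgroupOf L) := h4
    rw [QuotientGroup.eq] at h5
    simpa using h5
  rintro _ ⟨w, hw, rfl⟩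
  have h1 := map_derivedSeries_le_derivedSeries (Subgroup.inclusion hNL) M.factorial
    (Subgroup.mem_map_of_mem _ hw)
  exact hker h1

theorem aux_moved {k M G X : Type*} [Field k] [AddCommGroup M] [Module k M] [FiniteDimensional k M]
    [Group G] [Finite X] [MulAction G X] (ρ : Representation k G M)
    (W : X → Submodule k M) (hW : iSupIndep W) (hW0 : ∀ x, W x ≠ ⊥)
    (hmap : ∀ g x v, v ∈ W x → ρ g v ∈ W (g • x)) (p n : ℕ) (hp : p.Prime) (hn : 1 ≤ n)
    (φ : G) (hφ : φ ^ p ^ n = 1) :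
    Nat.card {x : X // φ ^ p ^ (n - 1) • x ≠ x} ≤
      finrank k (LinearMap.ker (ρ φ - 1)) * p ^ n := by
  classical
  set z := φ ^ p ^ (n - 1) with hz
  set N := p ^ n with hN
  have hNpos : 0 < N := pow_pos hp.pos n
  have hreg : ∀ x : X, z • x ≠ x → ∀ e, φ ^ e • x = x → N ∣ e := by
    intro x hx e he
    rw [MulAction.pow_smul_eq_iff_period_dvd] at he
    have h1 : MulAction.period φ x ∣ p ^ n := by
      rw [← MulAction.pow_smul_eq_iff_period_dvd, hφ, one_smul]
    obtain ⟨a, ha, hpa⟩ := (Nat.dvd_prime_pow hp).1 h1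
    have : a = n := by
      by_contra hne
      apply hx
      rw [hz, MulAction.pow_smul_eq_iff_period_dvd, hpa]
      exact pow_dvd_pow p (by omega)
    rw [hpa, this] at he
    exact he
  have hinj : ∀ x : X, z • x ≠ x → ∀ i j : Fin N, φ ^ (i : ℕ) • x = φ ^ (j : ℕ) • x → i = j := by
    have haux : ∀ x : X, z • x ≠ x → ∀ i j : ℕ, i ≤ j → j < N →
        φ ^ i • x = φ ^ j • x → i = j := by
      intro x hx i j hij hj h
      obtain ⟨d, rfl⟩ := Nat.exists_eq_add_of_le hij
      rw [pow_add, mul_smul, smul_left_cancel_iff] at h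
      have := Nat.eq_zero_of_dvd_of_lt (hreg x hx d h.symm) (by omega)
      omega
    intro x hx i j h
    apply Fin.ext
    rcases le_total (i : ℕ) (j : ℕ) with hij | hij
    · exact haux x hx i j hij j.2 h
    · exact (haux x hx j i hij i.2 h.symm).symm
  let O := MulAction.orbitRel.Quotient (Subgroup.zpowers φ) X
  let r : X → X := fun x => (Quotient.mk (MulAction.orbitRel (Subgroup.zpowers φ) X) x).out
  have hrpow : ∀ x, ∃ i : Fin N, φ ^ (i : ℕ) • r x = x := by
    intro x
    have h1 : (MulAction.orbitRel (Subgroup.zpowers φ) X) x (r x) :=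
      (MulAction.orbitRel (Subgroup.zpowers φ) X).symm
        (Quotient.mk_out (s := MulAction.orbitRel (Subgroup.zpowers φ) X) x)
    rw [MulAction.orbitRel_apply] at h1
    obtain ⟨⟨g, hg⟩, hgx⟩ := h1
    have hfin : IsOfFinOrder φ := isOfFinOrder_iff_pow_eq_one.2 ⟨N, hNpos, hφ⟩
    obtain ⟨i, hi⟩ := hfin.mem_powers_iff_mem_zpowers.2 hg
    refine ⟨⟨i % N, Nat.mod_lt _ hNpos⟩, ?_⟩
    have h2 : φ ^ (i % N) = φ ^ i := (pow_eq_pow_mod i hφ).symm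
    simp only [h2]
    have : g • r x = x := hgx
    simp only at hi
    rw [hi, this]
  have hrc : ∀ x (i : ℕ), r (φ ^ i • x) = r x := by
    intro x i
    simp only [r]
    congr 1
    apply Quotient.sound
    refine ⟨⟨φ ^ i, Subgroup.npow_mem_zpowers φ i⟩, rfl⟩
  let T := {x : X // z • x ≠ x ∧ r x = x}
  have hrm : ∀ x, z • x ≠ x → z • r x ≠ r x := by
    intro x hx h
    obtain ⟨i, hi⟩ := hrpow x
    apply hx
    rw [← hi, ← mul_smul, hz, ← pow_add, add_comm, pow_add, mul_smul, ← hz, h]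
  have hrr : ∀ x, r (r x) = r x := by
    intro x
    obtain ⟨i, hi⟩ := hrpow x
    conv_rhs => rw [← hi]
    exact (hrc _ _).symm
  have : Fintype T := Fintype.ofFinite T
  -- counting
  have hcount : Nat.card {x : X // z • x ≠ x} ≤ Fintype.card T * N := by
    choose i hi using hrpow
    let F : {x : X // z • x ≠ x} → T × Fin N := fun x => (⟨r x.1, hrm _ x.2, hrr _⟩, i x.1)
    have hF : Function.Injective F := by
      intro x y h
      have h1 : r x.1 = r y.1 := congrArg (fun t : T × Fin N => t.1.1) h
      have h2 : i x.1 = i y.1 := congrArg (fun t : T × Fin N => t.2) h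
      apply Subtype.ext
      rw [← hi x.1, ← hi y.1, h1, h2]
    have := Nat.card_le_card_of_injective F hF
    simpa using this
  refine hcount.trans (Nat.mul_le_mul_right N ?_)
  -- linear independence
  have hv : ∀ x, ∃ v ∈ W x, v ≠ 0 := fun x => (Submodule.ne_bot_iff _).1 (hW0 x)
  choose v hvW hv0 using hv
  let c : T × Fin N → X := fun t => φ ^ (t.2 : ℕ) • t.1.1
  have hc : Function.Injective c := by
    rintro ⟨t, i⟩ ⟨t', i'⟩ h
    simp only [c] at h
    have h1 : t = t' := by
      apply Subtype.ext
      rw [← t.2.2, ← t'.2.2, ← hrc t.1 i, ← hrc t'.1 i', h]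
    subst h1
    rw [hinj _ t.2.1 _ _ h]
  let b : T × Fin N → M := fun t => ρ (φ ^ (t.2 : ℕ)) (v t.1.1)
  have hρ0 : ∀ g v, v ≠ 0 → ρ g v ≠ 0 := by
    intro g v hv h
    apply hv
    have : ρ g⁻¹ (ρ g v) = v := by simp
    rw [← this, h, map_zero]
  have hb : LinearIndependent k b :=
    (hW.comp hc).linearIndependent (fun t => W (c t)) (fun t => hmap _ _ _ (hvW _))
      (fun t => hρ0 _ _ (hv0 _))
  let u : T → M := fun t => ∑ i : Fin N, b (t, i)
  have hu : LinearIndependent k u := by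
    rw [Fintype.linearIndependent_iff] at hb ⊢
    intro a ha t
    refine hb (fun s => a s.1) ?_ (t, ⟨0, hNpos⟩)
    rw [Fintype.sum_prod_type]
    simpa only [u, Finset.smul_sum] using ha
  have huk : ∀ t, u t ∈ LinearMap.ker (ρ φ - 1) := by
    intro t
    rw [LinearMap.mem_ker, LinearMap.sub_apply, sub_eq_zero]
    have h1 : u t = ∑ i ∈ Finset.range N, ρ (φ ^ i) (v t.1) := by
      simp only [u, b]
      exact Fin.sum_univ_eq_sum_range (fun i => ρ (φ ^ i) (v t.1)) N
    rw [h1, map_sum]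
    have h2 : ∀ i, ρ φ (ρ (φ ^ i) (v t.1)) = ρ (φ ^ (i + 1)) (v t.1) := by
      intro i; rw [pow_succ', map_mul]; rfl
    simp only [h2]
    have h3 := Finset.sum_range_succ (fun i => ρ (φ ^ i) (v t.1)) N
    have h4 := Finset.sum_range_succ' (fun i => ρ (φ ^ i) (v t.1)) N
    rw [h3, hφ, pow_zero] at h4
    exact (add_right_cancel h4).symm
  have hu' : LinearIndependent k (fun t => (⟨u t, huk t⟩ : LinearMap.ker (ρ φ - 1))) := by
    apply LinearIndependent.of_comp (LinearMap.ker (ρ φ - 1)).subtype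
    exact hu
  exact hu'.fintype_card_le_finrank

theorem aux_weights {k M G : Type} [Field k] [IsAlgClosed k] [AddCommGroup M] [Module k M]
    [FiniteDimensional k M] [Group G] [Finite G] (hG : (Nat.card G : k) ≠ 0)
    (ρ : Representation k G M) (A : Subgroup G) [A.Normal]
    (hA : ∀ a ∈ A, ∀ b ∈ A, a * b = b * a) :
    ∃ (X : Type) (_ : Finite X) (_ : MulAction G X) (W : X → Submodule k M),
      iSupIndep W ∧ (∀ x, W x ≠ ⊥) ∧ (∀ (g : G) x v, v ∈ W x → ρ g v ∈ W (g • x)) ∧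
      ∀ g : G, (∀ x : X, g • x = x) → ∀ a ∈ A, ρ (g * a) = ρ (a * g) := by
  classical
  let Wt : (A → k) → Submodule k M := fun χ => ⨅ a : A, Module.End.eigenspace (ρ a) (χ a)
  have hmem : ∀ χ v, v ∈ Wt χ ↔ ∀ a : A, ρ a v = χ a • v := by
    intro χ v
    simp only [Wt, Submodule.mem_iInf, Module.End.mem_eigenspace_iff]
  have hss : ∀ g : G, Module.End.IsSemisimple (ρ g) := by
    intro g
    have hsep := (Polynomial.X_pow_sub_one_separable_iff (F := k)).2 hG
    refine Module.End.isSemisimple_of_squarefree_aeval_eq_zero hsep.squarefree ?_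
    rw [map_sub, map_pow, Polynomial.aeval_X, map_one, ← map_pow, pow_card_eq_one', map_one,
      sub_self]
  have heq : ∀ χ : A → k, Wt χ = ⨅ a : A, Module.End.maxGenEigenspace (ρ a) (χ a) := by
    intro χ
    refine iInf_congr fun a => ?_
    exact ((Module.End.isFinitelySemisimple_iff_isSemisimple.2
      (hss a)).maxGenEigenspace_eq_eigenspace _).symm
  have hcomm : ∀ a b : A, Commute (S := Module.End k M) (ρ a) (ρ b) := by
    intro a b
    rw [Commute, SemiconjBy, ← map_mul, ← map_mul, hA a a.2 b b.2]
  have hind : iSupIndep Wt := by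
    rw [funext heq]
    exact Module.End.independent_iInf_maxGenEigenspace_of_forall_mapsTo (fun a : A => ρ a)
      (fun i j => Module.End.mapsTo_maxGenEigenspace_of_comm (hcomm j i))
  have htop : ⨆ χ, Wt χ = ⊤ := by
    simp only [heq]
    exact Module.End.iSup_iInf_maxGenEigenspace_eq_top_of_iSup_maxGenEigenspace_eq_top_of_commute
      (fun a : A => ρ a)
      (fun a b _ => hcomm a b) (fun a => Module.End.iSup_maxGenEigenspace_eq_top _)
  let act : G → (A → k) → (A → k) := fun g χ a => χ (MulAut.conjNormal g⁻¹ a)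
  have hmap : ∀ g χ v, v ∈ Wt χ → ρ g v ∈ Wt (act g χ) := by
    intro g χ v hv
    rw [hmem] at hv ⊢
    intro a
    have h1 := hv (MulAut.conjNormal g⁻¹ a)
    have h2 : ρ a (ρ g v) = ρ g (ρ (MulAut.conjNormal g⁻¹ a : A) v) := by
      rw [← Module.End.mul_apply, ← Module.End.mul_apply, ← map_mul, ← map_mul]
      congr 2
      simp [mul_assoc]
    rw [h2, h1, map_smul]
  have hne : ∀ g χ, Wt χ ≠ ⊥ → Wt (act g χ) ≠ ⊥ := by
    intro g χ h
    obtain ⟨v, hv, hv0⟩ := (Submodule.ne_bot_iff _).1 h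
    refine (Submodule.ne_bot_iff _).2 ⟨_, hmap g χ v hv, ?_⟩
    intro h
    apply hv0
    have : ρ g⁻¹ (ρ g v) = v := by simp
    rw [← this, h, map_zero]
  let X := {χ : A → k // Wt χ ≠ ⊥}
  let inst : MulAction G X :=
    { smul := fun g x => ⟨act g x.1, hne g x.1 x.2⟩
      one_smul := by
        intro x
        apply Subtype.ext
        funext a
        change x.1 (MulAut.conjNormal (1 : G)⁻¹ a) = x.1 a
        simp
      mul_smul := by
        intro g h x
        apply Subtype.ext
        funext a
        change x.1 (MulAut.conjNormal (g * h)⁻¹ a) =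
          x.1 (MulAut.conjNormal h⁻¹ (MulAut.conjNormal g⁻¹ a))
        rw [mul_inv_rev, map_mul, MulAut.mul_apply] }
  refine ⟨X, WellFoundedGT.finite_ne_bot_of_iSupIndep hind, inst, fun x => Wt x.1,
    hind.comp Subtype.val_injective, fun x => x.2, fun g x v hv => hmap g x.1 v hv, ?_⟩
  intro g hg a ha
  have hle : ⨆ χ, Wt χ ≤ LinearMap.eqLocus (ρ (g * a)) (ρ (a * g)) := by
    refine iSup_le fun χ => ?_
    by_cases h : Wt χ = ⊥
    · rw [h]; exact bot_le
    intro v hv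
    have h1 : act g χ = χ := congrArg Subtype.val (hg ⟨χ, h⟩)
    have h2 := hmap g χ v hv
    rw [h1, hmem] at h2
    rw [hmem] at hv
    rw [LinearMap.mem_eqLocus, map_mul, map_mul, Module.End.mul_apply, Module.End.mul_apply,
      h2 ⟨a, ha⟩, hv ⟨a, ha⟩, map_smul]
  rw [htop] at hle
  ext v
  exact hle (Submodule.mem_top (x := v))

theorem aux_ker {F k V : Type*} [Field F] [Field k] [Algebra F k] [AddCommGroup V] [Module F V]
    [FiniteDimensional F V] (f : Module.End F V) :
    finrank k (LinearMap.ker (f.baseChange k - 1)) = finrank F (LinearMap.ker (f - 1)) := by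
  have h : f.baseChange k - 1 = (f - 1).baseChange k := by
    rw [LinearMap.baseChange_sub, LinearMap.baseChange_one]
  rw [h]
  exact (LinearMap.tensorKerEquiv k k (f - 1)).symm.finrank_eq.trans finrank_baseChange

theorem aux_conj {G : Type*} [Group G] (a b : G) :
    a⁻¹ * (b * a * b⁻¹) = a⁻¹ * b * (a⁻¹)⁻¹ * b⁻¹ := by
  group

/-- The group-theoretic core: a finite `p`-group `G` acting faithfully in coprime characteristic. -/
theorem aux_core {p n q : ℕ} (hp : p.Prime) (hn : 1 ≤ n) (hq : q.Prime) (hqp : q ≠ p)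
    {G : Type} [Group G] [Finite G] (hG : IsPGroup p G) (φ : G) (hφ : φ ^ p ^ n = 1)
    {V : Type} [AddCommGroup V] [Module (ZMod q) V] [Finite V]
    (ρ : Representation (ZMod q) G V) (hρ : Function.Injective ρ) (M : ℕ)
    (hM : p * (Nat.card {v : V // ρ φ v = v} * p ^ n + 1) ≤ M) :
    ∃ A : Subgroup G, (∀ a ∈ A, ∀ b ∈ A, a * b = b * a) ∧
      (derivedSeries (Subgroup.normalClosure {φ ^ p ^ (n - 1)}) M.factorial).map
        (Subgroup.subtype _) ≤ A := by
  have : Fact p.Prime := ⟨hp⟩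
  have : Fact q.Prime := ⟨hq⟩
  have : FiniteDimensional (ZMod q) V := Module.Finite.of_finite
  obtain ⟨A, hAn, hAc, hAs⟩ := aux_self_centralizing hG
  refine ⟨A, hAc, ?_⟩
  let k := AlgebraicClosure (ZMod q)
  have hchar : CharP k q := charP_of_injective_algebraMap (algebraMap (ZMod q) k).injective q
  let σ : Representation k G (TensorProduct (ZMod q) k V) :=
    (Module.End.baseChangeHom (ZMod q) k V : _ →* _).comp ρ
  have hσ : ∀ g, σ g = (ρ g).baseChange k := fun g => rfl
  have hσinj : Function.Injective σ :=
    (LinearMap.baseChangeHom_injective (ZMod q) V k (N := V)).comp hρ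
  have hcard : (Nat.card G : k) ≠ 0 := by
    obtain ⟨a, ha⟩ := hG.exists_card_eq
    rw [Ne, CharP.cast_eq_zero_iff k q, ha]
    intro h
    exact hqp ((Nat.prime_dvd_prime_iff_eq hq hp).1 (hq.dvd_of_dvd_pow h))
  obtain ⟨X, hX, hact, W, hW, hW0, hmap, hfix⟩ := aux_weights hcard σ A hAc
  have hmoved := aux_moved σ W hW hW0 hmap p n hp hn φ hφ
  have hd : finrank k (LinearMap.ker (σ φ - 1)) ≤ Nat.card {v : V // ρ φ v = v} := by
    rw [hσ, aux_ker]
    have h1 : Nat.card {v : V // ρ φ v = v} = Nat.card (LinearMap.ker (ρ φ - 1)) := by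
      apply Nat.card_congr
      refine Equiv.subtypeEquivRight fun v => ?_
      rw [LinearMap.mem_ker, LinearMap.sub_apply, sub_eq_zero]
      rfl
    rw [h1, Module.natCard_eq_pow_finrank (K := ZMod q), Nat.card_zmod]
    exact (Nat.lt_pow_self hq.one_lt).le
  have hs : Nat.card {x : X // φ ^ p ^ (n - 1) • x ≠ x} ≤
      Nat.card {v : V // ρ φ v = v} * p ^ n := hmoved.trans (Nat.mul_le_mul_right _ hd)
  intro g hg
  apply hAs
  intro a ha
  apply hσinj
  refine hfix g (fun x => ?_) a ha
  exact aux_perm hG _ _ hs M hM x hg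

theorem derived_length_of_commutator_with_power_of_automorphism_bounded :
    ∃ f : ℕ × ℕ → ℕ, ∀ (p n q : ℕ), p.Prime → 1 ≤ n → q.Prime → q ≠ p →
      ∀ (P : Type) [Group P] [Finite P], IsPGroup p P →
        ∀ φ : MulAut P, orderOf φ = p ^ n →
          ∀ (V : Type) [AddCommGroup V] [Module (ZMod q) V] [Finite V],
            ∀ ρ : Representation (ZMod q)
                (P ⋊[(Subgroup.zpowers φ).subtype] ↥(Subgroup.zpowers φ)) V,
              Function.Injective ρ →
              derivedSeries ↥(commutatorWithAut (φ ^ p ^ (n - 1)))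
                (f (Nat.card {v : V //
                    ρ (SemidirectProduct.inr ⟨φ, Subgroup.mem_zpowers φ⟩) v = v}, p ^ n)) = ⊥ := by
  refine ⟨fun x => (x.2 * (x.1 * x.2 + 1)).factorial + 1, ?_⟩
  intro p n q hp hn hq hqp P _ _ hP φ hφ V _ _ _ ρ hρ
  have : Fact p.Prime := ⟨hp⟩
  let G := P ⋊[(Subgroup.zpowers φ).subtype] ↥(Subgroup.zpowers φ)
  have hGc : Nat.card G = Nat.card P * Nat.card (Subgroup.zpowers φ) := SemidirectProduct.card
  have hGfin : Finite G := Finite.of_equiv _ SemidirectProduct.equivProd.symm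
  have hGp : IsPGroup p G := by
    obtain ⟨a, ha⟩ := hP.exists_card_eq
    refine IsPGroup.of_card (n := a + n) ?_
    rw [hGc, ha, Nat.card_zpowers, hφ, pow_add]
  let c : Subgroup.zpowers φ := ⟨φ, Subgroup.mem_zpowers φ⟩
  let φ' : G := SemidirectProduct.inr c
  have hφ' : φ' ^ p ^ n = 1 := by
    have : c ^ p ^ n = 1 := by
      apply Subtype.ext
      change φ ^ p ^ n = 1
      rw [← hφ, pow_orderOf_eq_one]
    simp only [φ']
    rw [← map_pow, this, map_one]
  set m := Nat.card {v : V // ρ (SemidirectProduct.inr ⟨φ, Subgroup.mem_zpowers φ⟩) v = v} with hm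
  obtain ⟨A, hAc, hA⟩ := aux_core hp hn hq hqp hGp φ' hφ' ρ hρ (p ^ n * (m * p ^ n + 1))
    (Nat.mul_le_mul_right _ (Nat.le_self_pow (by omega) p))
  set D := (p ^ n * (m * p ^ n + 1)).factorial with hD
  change derivedSeries _ (D + 1) = ⊥
  set z : G := φ' ^ p ^ (n - 1) with hz
  have hKN : ∀ y ∈ commutatorWithAut (φ ^ p ^ (n - 1)),
      (SemidirectProduct.inl y : G) ∈ Subgroup.normalClosure {z} := by
    intro y hy
    have hle : commutatorWithAut (φ ^ p ^ (n - 1)) ≤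
        (Subgroup.normalClosure {z}).comap SemidirectProduct.inl := by
      rw [commutatorWithAut, Subgroup.closure_le]
      rintro _ ⟨x, rfl⟩
      have hzm : z ∈ Subgroup.normalClosure {z} := Subgroup.subset_normalClosure rfl
      have h1 := Subgroup.normalClosure_normal.conj_mem z hzm (SemidirectProduct.inl x⁻¹ : G)
      have h2 := Subgroup.mul_mem _ h1 (Subgroup.inv_mem _ hzm)
      have h3 : z = SemidirectProduct.inr (c ^ p ^ (n - 1)) := by
        rw [hz, map_pow]
      have h4 : (SemidirectProduct.inl ((φ ^ p ^ (n - 1)) x) : G) =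
          z * SemidirectProduct.inl x * z⁻¹ := by
        rw [h3, ← map_inv, ← SemidirectProduct.inl_aut]
        rfl
      change (SemidirectProduct.inl (x⁻¹ * (φ ^ p ^ (n - 1)) x) : G) ∈
        Subgroup.normalClosure {z}
      rw [map_mul, h4]
      have h5 : ∀ a b : G, a⁻¹ * (b * a * b⁻¹) = a⁻¹ * b * (a⁻¹)⁻¹ * b⁻¹ :=
        aux_conj
      rw [map_inv] at h2 ⊢
      exact (h5 (SemidirectProduct.inl x) z) ▸ h2
    exact hle hy
  let θ : commutatorWithAut (φ ^ p ^ (n - 1)) →* Subgroup.normalClosure {z} :=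
    ((SemidirectProduct.inl : P →* G).comp (Subgroup.subtype _)).codRestrict _
      (fun y => hKN y.1 y.2)
  have hder : ∀ y ∈ derivedSeries (commutatorWithAut (φ ^ p ^ (n - 1))) D,
      (SemidirectProduct.inl y.1 : G) ∈ A := by
    intro y hy
    apply hA
    exact Subgroup.mem_map_of_mem _ (map_derivedSeries_le_derivedSeries θ D
      (Subgroup.mem_map_of_mem θ hy))
  rw [derivedSeries_succ, Subgroup.commutator_eq_bot_iff_le_centralizer]
  intro y hy w hw
  apply Subtype.ext
  apply SemidirectProduct.inl_injective (φ := (Subgroup.zpowers φ).subtype)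
  simp only [Subgroup.coe_mul, map_mul]
  exact hAc _ (hder w hw) _ (hder y hy)
end

section
/- There exists a function f : ℕ × ℕ × ℕ → ℕ with the following property: for every prime p and natural numbers n, m, if a finite p-soluble group G admits an automorphism φ of order p^n and a φ-invariant Sylow p-subgroup P of G satisfies |C_P(φ)| = p^m, then the p-length of G is at most f(p, n, m). -/
/-- A normal series of `G` (each term normal in `G`) each of whose factors is either a
`p`-group or a `p'`-group. -/
def IsPPrimePSeries (p : ℕ) {G : Type*} [Group G] (H : ℕ → Subgroup G) (k : ℕ) : Prop :=
  H 0 = ⊥ ∧ H k = ⊤ ∧ (∀ i, (H i).Normal) ∧ (∀ i, H i ≤ H (i + 1)) ∧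
    ∀ i < k, (∃ j : ℕ, Nat.card (H (i + 1) ⧸ (H i).subgroupOf (H (i + 1))) = p ^ j) ∨
      ¬ p ∣ Nat.card (H (i + 1) ⧸ (H i).subgroupOf (H (i + 1)))

/-- A finite group is `p`-soluble iff it has a normal series each of whose factors is a
`p`-group or a `p'`-group. -/
def IsPSoluble (p : ℕ) (G : Type*) [Group G] : Prop :=
  ∃ (k : ℕ) (H : ℕ → Subgroup G), IsPPrimePSeries p H k

/-- The `p`-length of `G` is at most `N`: there is a normal series with `p`- or `p'`-factors
having at most `N` factors of order divisible by `p` (i.e. at most `N` nontrivial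
`p`-factors). -/
def PLengthLE (p : ℕ) (G : Type*) [Group G] (N : ℕ) : Prop :=
  ∃ (k : ℕ) (H : ℕ → Subgroup G), IsPPrimePSeries p H k ∧
    ((Finset.range k).filter
      (fun i => p ∣ Nat.card (H (i + 1) ⧸ (H i).subgroupOf (H (i + 1))))).card ≤ N


section Helpers

/-- Fixed points in an equivariant image do not outnumber fixed points upstairs. -/
lemma card_fixed_le_of_surjective {G Q : Type*} [Group G] [Group Q] [Finite G]
    (f : G →* Q) (hf : Function.Surjective f) (α : G →* G) (β : Q →* Q)
    (h : ∀ x, f (α x) = β (f x)) :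
    Nat.card {q : Q // β q = q} ≤ Nat.card {x : G // α x = x} := by
  classical
  have : Finite Q := Finite.of_surjective f hf
  let D := {x : G // β (f x) = f x}
  have hk : ∀ d : D, d.1⁻¹ * α d.1 ∈ f.ker := by
    intro d
    rw [MonoidHom.mem_ker, map_mul, map_inv, h, d.2, inv_mul_cancel]
  let δ : D → f.ker := fun d => ⟨d.1⁻¹ * α d.1, hk d⟩
  have h1 : Nat.card ({q : Q // β q = q} × f.ker) ≤ Nat.card D := by
    let s := Function.surjInv hf
    have hs : ∀ q, f (s q) = q := Function.surjInv_eq hf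
    have hm : ∀ x : {q : Q // β q = q} × f.ker, f (s x.1.1 * x.2.1) = x.1.1 := by
      intro x
      rw [map_mul, hs, MonoidHom.mem_ker.1 x.2.2, mul_one]
    refine Nat.card_le_card_of_injective
      (fun x => (⟨s x.1.1 * x.2.1, by rw [hm]; exact x.1.2⟩ : D)) ?_
    rintro x y hxy
    have e : s x.1.1 * x.2.1 = s y.1.1 * y.2.1 := congrArg Subtype.val hxy
    have e1 : x.1.1 = y.1.1 := by rw [← hm x, ← hm y, e]
    rw [e1] at e
    exact Prod.ext (Subtype.ext e1) (Subtype.ext (mul_left_cancel e))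
  have h2 : Nat.card D ≤ Nat.card (f.ker × {x : G // α x = x}) := by
    have key : ∀ d d' : D, δ d = δ d' → α (d.1 * d'.1⁻¹) = d.1 * d'.1⁻¹ := by
      intro d d' e
      have e : d.1⁻¹ * α d.1 = d'.1⁻¹ * α d'.1 := congrArg Subtype.val e
      have e' : α d.1 = d.1 * (d'.1⁻¹ * α d'.1) := by rw [← e]; group
      rw [map_mul, map_inv, e']; group
    let s : Set.range δ → D := fun y => y.2.choose
    have hs : ∀ y, δ (s y) = y := fun y => y.2.choose_spec
    refine Nat.card_le_card_of_injective
      (fun d => (δ d, ⟨d.1 * (s ⟨δ d, d, rfl⟩).1⁻¹, key _ _ (hs ⟨δ d, d, rfl⟩).symm⟩)) ?_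
    intro d d' e
    have ea : δ d = δ d' := congrArg Prod.fst e
    have eb : d.1 * (s ⟨δ d, d, rfl⟩).1⁻¹ = d'.1 * (s ⟨δ d', d', rfl⟩).1⁻¹ :=
      congrArg Subtype.val (congrArg Prod.snd e)
    have ec : (⟨δ d, d, rfl⟩ : Set.range δ) = ⟨δ d', d', rfl⟩ := Subtype.ext ea
    rw [ec] at eb
    exact Subtype.ext (mul_right_cancel eb)
  rw [Nat.card_prod] at h1 h2
  have h3 := h1.trans h2
  rw [mul_comm] at h3
  exact Nat.le_of_mul_le_mul_left h3 Nat.card_pos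

lemma card_le_ker_pow {V : Type*} [AddCommGroup V] [Finite V] {R : Type*} [CommRing R]
    [Module R V] (f : Module.End R V) (k : ℕ) :
    Nat.card V ≤ Nat.card (LinearMap.ker f) ^ k * Nat.card (LinearMap.range (f ^ k)) := by
  induction k with
  | zero =>
    rw [pow_zero, pow_zero, one_mul]
    refine Nat.card_le_card_of_injective (fun v => ⟨v, ⟨v, rfl⟩⟩) ?_
    intro a b h
    exact congrArg Subtype.val h
  | succ k ih =>
    refine ih.trans ?_
    rw [pow_succ, mul_assoc]
    refine Nat.mul_le_mul_left _ ?_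
    rw [← Nat.card_prod]
    let F : LinearMap.range (f ^ k) → LinearMap.range (f ^ (k + 1)) := fun x =>
      ⟨f x.1, by
        obtain ⟨y, hy⟩ := x.2
        exact ⟨y, by rw [pow_succ', Module.End.mul_apply, hy]⟩⟩
    let s : Set.range F → LinearMap.range (f ^ k) := fun y => y.2.choose
    have hs : ∀ y, F (s y) = y := fun y => y.2.choose_spec
    refine Nat.card_le_card_of_injective
      (fun d => (⟨d.1 - (s ⟨F d, d, rfl⟩).1, ?_⟩, F d)) ?_
    · rw [LinearMap.mem_ker, map_sub, sub_eq_zero]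
      exact (congrArg Subtype.val (hs ⟨F d, d, rfl⟩)).symm
    · intro d d' e
      have ea : F d = F d' := congrArg Prod.snd e
      have eb : d.1 - (s ⟨F d, d, rfl⟩).1 = d'.1 - (s ⟨F d', d', rfl⟩).1 :=
        congrArg Subtype.val (congrArg Prod.fst e)
      have ec : (⟨F d, d, rfl⟩ : Set.range F) = ⟨F d', d', rfl⟩ := Subtype.ext ea
      rw [ec] at eb
      exact Subtype.ext (sub_left_inj.1 eb)

lemma card_le_fixed_pow_additive {p n : ℕ} [hp : Fact p.Prime] {V : Type*} [AddCommGroup V]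
    [Finite V] [Module (ZMod p) V] (β : Module.End (ZMod p) V) (hβ : β ^ (p ^ n) = 1) :
    Nat.card V ≤ Nat.card {v : V // β v = v} ^ (p ^ n) := by
  have h0 : (β - 1) ^ (p ^ n) = 0 := by
    have h := sub_pow_char_pow (R := Polynomial (ZMod p)) Polynomial.X 1 n (p := p)
    have h' := congrArg (Polynomial.aeval β) h
    simpa [hβ] using h'
  have h := card_le_ker_pow (β - 1) (p ^ n)
  rw [h0, LinearMap.range_zero,
    Nat.card_unique (α := ((⊥ : Submodule (ZMod p) V) : Type _)), mul_one] at h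
  have e : Nat.card (LinearMap.ker (β - 1)) = Nat.card {v : V // β v = v} := by
    refine Nat.card_congr (Equiv.subtypeEquivRight fun v => ?_)
    rw [LinearMap.mem_ker, LinearMap.sub_apply, Module.End.one_apply, sub_eq_zero]
  rwa [e] at h

lemma card_le_fixed_pow {p n : ℕ} (hp : p.Prime) {V : Type*} [Group V]
    [Finite V] (hc : ∀ a b : V, a * b = b * a) (hexp : ∀ a : V, a ^ p = 1)
    (β : V →* V) (hβ : ∀ v, β^[p ^ n] v = v) :
    Nat.card V ≤ Nat.card {v : V // β v = v} ^ (p ^ n) := by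
  have := Fact.mk hp
  let : CommGroup V := { (inferInstance : Group V) with mul_comm := hc }
  let : Module (ZMod p) (Additive V) := AddCommGroup.zmodModule (n := p) (fun x => hexp x.toMul)
  have : Finite (Additive V) := ‹Finite V›
  let b : Module.End (ZMod p) (Additive V) := AddMonoidHom.toZModLinearMap p (MonoidHom.toAdditive β)
  have hb : b ^ (p ^ n) = 1 := by
    ext v
    rw [Module.End.pow_apply]
    exact hβ v.toMul
  exact card_le_fixed_pow_additive b hb

/-- The quotient of a finite `p`-group by a maximal subgroup. -/
lemma coatom_facts {p : ℕ} [hp : Fact p.Prime] {T : Type*} [Group T] [Finite T]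
    (hT : IsPGroup p T) (M : Subgroup T) (hM : IsCoatom M) :
    (∀ a b : T, (a * b)⁻¹ * (b * a) ∈ M) ∧ ∀ a : T, a ^ p ∈ M := by
  have := hT.isNilpotent
  have : M.Normal := Subgroup.NormalizerCondition.normal_of_coatom M
    Group.normalizerCondition_of_isNilpotent hM
  have hQ : IsPGroup p (T ⧸ M) := hT.to_quotient M
  have : Nontrivial (T ⧸ M) := QuotientGroup.nontrivial_iff.2 hM.1
  obtain ⟨k, hk0, hk⟩ := hQ.nontrivial_iff_card.1 inferInstance
  obtain ⟨x, hx⟩ := exists_prime_orderOf_dvd_card' (G := T ⧸ M) p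
    (hk ▸ dvd_pow_self p hk0.ne')
  have hz : (Subgroup.zpowers x).comap (QuotientGroup.mk' M) = ⊤ := by
    apply hM.2
    refine lt_of_le_of_ne ?_ ?_
    · intro m hm
      rw [Subgroup.mem_comap, QuotientGroup.mk'_apply, (QuotientGroup.eq_one_iff m).2 hm]
      exact one_mem _
    · intro e
      obtain ⟨y, rfl⟩ := QuotientGroup.mk'_surjective M x
      have : y ∈ M := by rw [e]; exact Subgroup.mem_zpowers _
      rw [QuotientGroup.mk'_apply, (QuotientGroup.eq_one_iff y).2 this, orderOf_one] at hx
      exact hp.out.one_lt.ne hx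
  have hall : ∀ a : T, ∃ i : ℤ, x ^ i = (a : T ⧸ M) := by
    intro a
    have : a ∈ (Subgroup.zpowers x).comap (QuotientGroup.mk' M) := hz ▸ Subgroup.mem_top a
    exact Subgroup.mem_zpowers_iff.1 this
  constructor
  · intro a b
    obtain ⟨i, hi⟩ := hall a
    obtain ⟨j, hj⟩ := hall b
    rw [← QuotientGroup.eq, QuotientGroup.mk_mul, QuotientGroup.mk_mul, ← hi, ← hj,
      ← zpow_add, ← zpow_add, add_comm]
  · intro a
    obtain ⟨i, hi⟩ := hall a
    rw [← QuotientGroup.eq_one_iff, QuotientGroup.mk_pow, ← hi, ← zpow_natCast, zpow_comm,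
      zpow_natCast, ← hx, pow_orderOf_eq_one, one_zpow]

lemma mem_frattini {T : Type*} [Group T] {x : T} (h : ∀ M : Subgroup T, IsCoatom M → x ∈ M) :
    x ∈ frattini T := by
  simp only [frattini, Order.radical, Subgroup.mem_iInf]
  exact h

/-- The action of automorphisms on the Frattini quotient. -/
def frattiniAction (T : Type*) [Group T] : MulAut T →* Monoid.End (T ⧸ frattini T) where
  toFun α := QuotientGroup.map _ _ α.toMonoidHom
    (Subgroup.characteristic_iff_le_comap.1 frattini_characteristic α)
  map_one' := by
    ext x
    induction x using QuotientGroup.induction_on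
    rfl
  map_mul' a b := by
    ext x
    induction x using QuotientGroup.induction_on
    rfl

lemma frattiniAction_ker {p : ℕ} [hp : Fact p.Prime] {T : Type*} [Group T] [Finite T]
    (hT : IsPGroup p T) : IsPGroup p (frattiniAction T).ker := by
  classical
  have : Finite (MulAut T) := Finite.of_injective (fun a : MulAut T => (a : T → T))
    DFunLike.coe_injective
  rw [IsPGroup.iff_card]
  by_contra hcon
  obtain ⟨q, hq, hqd, hqp⟩ : ∃ q : ℕ, q.Prime ∧ q ∣ Nat.card (frattiniAction T).ker ∧ q ≠ p := by
    by_contra hno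
    push Not at hno
    exact hcon ⟨_, Nat.eq_prime_pow_of_unique_prime_dvd Nat.card_pos.ne'
      (fun {d} hd hdd => hno d hd hdd)⟩
  have := Fact.mk hq
  obtain ⟨⟨α, hα⟩, ho⟩ := exists_prime_orderOf_dvd_card' q hqd
  have ho : orderOf α = q := by rw [← ho, ← Subgroup.orderOf_coe]
  have hmod : ∀ t, (α t : T ⧸ frattini T) = t := by
    intro t
    have := DFunLike.congr_fun (MonoidHom.mem_ker.1 hα) (t : T ⧸ frattini T)
    exact this
  let F : Subgroup T :=
    { carrier := {t | α t = t}
      mul_mem' := fun {a b} ha hb => by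
        simp only [Set.mem_ofPred_eq] at *
        rw [map_mul, ha, hb]
      one_mem' := map_one α
      inv_mem' := fun {a} ha => by
        simp only [Set.mem_ofPred_eq] at *
        rw [map_inv, ha] }
  have hF : F ⊔ frattini T = ⊤ := by
    rw [eq_top_iff]
    intro t _
    let X := {x : T // (x : T ⧸ frattini T) = t}
    let : Fintype X := Fintype.ofFinite X
    let g : Function.End X := fun x => ⟨α x.1, (hmod x.1).trans x.2⟩
    have hgk : ∀ (k : ℕ) (x : X), ((g ^ k : Function.End X) x).1 = (α ^ k) x.1 := by
      intro k
      induction k with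
      | zero => intro x; rfl
      | succ k ih =>
        intro x
        rw [pow_succ', pow_succ']
        change α ((g ^ k : Function.End X) x).1 = α ((α ^ k) x.1)
        rw [ih]
    have hg : g ^ q ^ 1 = 1 := by
      funext x
      apply Subtype.ext
      rw [hgk, pow_one, ← ho, pow_orderOf_eq_one]
      rfl
    have hc := Equiv.Perm.card_fixedPoints_modEq hg
    have hX : Nat.card X = Nat.card (frattini T) := by
      refine Nat.card_congr ⟨fun x => ⟨t⁻¹ * x.1, QuotientGroup.eq.1 x.2.symm⟩,
        fun y => ⟨t * y.1, ?_⟩, fun x => by simp, fun y => by simp⟩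
      exact QuotientGroup.mk_mul_of_mem t y.2
    obtain ⟨j, hj⟩ := IsPGroup.iff_card.1 (hT.to_subgroup (frattini T))
    have hne : Fintype.card (Function.fixedPoints g) ≠ 0 := by
      intro h0
      rw [h0, ← Nat.card_eq_fintype_card, hX, hj] at hc
      have := (Nat.modEq_zero_iff_dvd.1 hc)
      exact hqp ((Nat.prime_dvd_prime_iff_eq hq hp.out).1 (hq.dvd_of_dvd_pow this))
    obtain ⟨⟨x, hx⟩⟩ := Fintype.card_pos_iff.1 (Nat.pos_of_ne_zero hne)
    have hxF : x.1 ∈ F := congrArg Subtype.val hx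
    have : t = x.1 * (x.1⁻¹ * t) := by group
    rw [this]
    exact Subgroup.mul_mem_sup hxF (QuotientGroup.eq.1 x.2)
  have hFt := frattini_nongenerating hF
  have : α = 1 := by
    ext t
    have : t ∈ F := hFt ▸ Subgroup.mem_top t
    exact this
  rw [this, orderOf_one] at ho
  exact hq.one_lt.ne ho

lemma factor_dvd {p a b : ℕ} (hp : p.Prime) (hab : a ∣ b)
    (h : (∃ j : ℕ, b = p ^ j) ∨ ¬ p ∣ b) : (∃ j : ℕ, a = p ^ j) ∨ ¬ p ∣ a := by
  rcases h with ⟨j, rfl⟩ | h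
  · obtain ⟨i, -, hi⟩ := (Nat.dvd_prime_pow hp).1 hab
    exact Or.inl ⟨i, hi⟩
  · exact Or.inr fun h' => h (h'.trans hab)

/-- `p`-solubility passes to quotients. -/
lemma IsPSoluble.quotient {p : ℕ} (hp : p.Prime) {G : Type*} [Group G] (h : IsPSoluble p G)
    (N : Subgroup G) [N.Normal] : IsPSoluble p (G ⧸ N) := by
  obtain ⟨k, H, h0, hk, hn, hle, hf⟩ := h
  refine ⟨k, fun i => (H i).map (QuotientGroup.mk' N), ?_, ?_, ?_, ?_, ?_⟩
  · simp [h0]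
  · simp only [hk]
    exact Subgroup.map_top_of_surjective _ (QuotientGroup.mk'_surjective N)
  · intro i
    exact (hn i).map _ (QuotientGroup.mk'_surjective N)
  · intro i
    exact Subgroup.map_mono (hle i)
  · intro i hi
    refine factor_dvd hp ?_ (hf i hi)
    change ((H i).map (QuotientGroup.mk' N)).relIndex ((H (i + 1)).map (QuotientGroup.mk' N)) ∣
      (H i).relIndex (H (i + 1))
    rw [Subgroup.relIndex_map_map, QuotientGroup.ker_mk']
    have := hn i
    have e : H (i + 1) ⊔ N = H (i + 1) ⊔ (H i ⊔ N) := by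
      rw [← sup_assoc, sup_eq_left.2 (hle i)]
    rw [e, Subgroup.relIndex_sup_right]
    exact Subgroup.relIndex_dvd_of_le_left _ le_sup_left

lemma PLengthLE.mono {p : ℕ} {G : Type*} [Group G] {a b : ℕ} (h : PLengthLE p G a)
    (hab : a ≤ b) : PLengthLE p G b := by
  obtain ⟨k, H, h1, h2⟩ := h
  exact ⟨k, H, h1, h2.trans hab⟩

/-- The `p`-length is at most the order. -/
lemma IsPSoluble.pLengthLE_card {p : ℕ} (hp : p.Prime) {G : Type*} [Group G] [Finite G]
    (h : IsPSoluble p G) : PLengthLE p G (Nat.card G) := by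
  obtain ⟨k, H, hH⟩ := h
  refine ⟨k, H, hH, ?_⟩
  obtain ⟨h0, hk, hn, hle, hf⟩ := hH
  have key : ∀ j, ((Finset.range j).filter
      (fun i => p ∣ Nat.card (H (i + 1) ⧸ (H i).subgroupOf (H (i + 1))))).card + 1
        ≤ Nat.card (H j) := by
    intro j
    induction j with
    | zero => rw [Finset.range_zero, Finset.filter_empty, Finset.card_empty]; exact Nat.card_pos
    | succ j ih =>
      have hc : Nat.card (H j) * (H j).relIndex (H (j + 1)) = Nat.card (H (j + 1)) := by
        rw [← Subgroup.relIndex_bot_left, ← Subgroup.relIndex_bot_left,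
          Subgroup.relIndex_mul_relIndex _ _ _ bot_le (hle j)]
      have hpos : 0 < Nat.card (H (j + 1)) := Nat.card_pos
      have hr0 : (H j).relIndex (H (j + 1)) ≠ 0 := by
        intro h; rw [h, mul_zero] at hc; omega
      rw [Finset.range_add_one, Finset.filter_insert]
      split_ifs with hd
      · rw [Finset.card_insert_of_notMem (by simp)]
        have h2 : 2 ≤ (H j).relIndex (H (j + 1)) :=
          hp.two_le.trans (Nat.le_of_dvd (Nat.pos_of_ne_zero hr0) hd)
        nlinarith
      · have h1 : 1 ≤ (H j).relIndex (H (j + 1)) := Nat.pos_of_ne_zero hr0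
        nlinarith
  have := key k
  rw [hk, Subgroup.card_top] at this
  omega

lemma PLengthLE.of_quotient {p : ℕ} {G : Type*} [Group G] (N : Subgroup G) [N.Normal]
    (hN : (∃ j, Nat.card N = p ^ j) ∨ ¬ p ∣ Nat.card N) {a : ℕ} (h : PLengthLE p (G ⧸ N) a) :
    PLengthLE p G (a + if p ∣ Nat.card N then 1 else 0) := by
  classical
  obtain ⟨k, H, ⟨h0, hk, hn, hle, hf⟩, hcard⟩ := h
  let H' : ℕ → Subgroup G := fun i => Nat.rec ⊥ (fun i _ => (H i).comap (QuotientGroup.mk' N)) i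
  have e0 : H' 0 = ⊥ := rfl
  have es : ∀ i, H' (i + 1) = (H i).comap (QuotientGroup.mk' N) := fun i => rfl
  have e1 : H' 1 = N := by
    rw [show H' 1 = _ from es 0, h0, MonoidHom.comap_bot, QuotientGroup.ker_mk']
  have c0 : Nat.card (H' (0 + 1) ⧸ (H' 0).subgroupOf (H' (0 + 1))) = Nat.card N := by
    change (H' 0).relIndex (H' 1) = _
    rw [e0, e1, Subgroup.relIndex_bot_left]
  have cs : ∀ i, Nat.card (H' (i + 1 + 1) ⧸ (H' (i + 1)).subgroupOf (H' (i + 1 + 1))) =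
      Nat.card (H (i + 1) ⧸ (H i).subgroupOf (H (i + 1))) := by
    intro i
    change (H' (i + 1)).relIndex (H' (i + 1 + 1)) = (H i).relIndex (H (i + 1))
    rw [es, es, Subgroup.relIndex_comap, Subgroup.map_comap_eq_self_of_surjective
      (QuotientGroup.mk'_surjective N)]
  refine ⟨k + 1, H', ⟨e0, ?_, ?_, ?_, ?_⟩, ?_⟩
  · rw [es, hk, Subgroup.comap_top]
  · rintro (_ | i)
    · rw [e0]; infer_instance
    · rw [es]; exact (hn i).comap _
  · rintro (_ | i)
    · rw [e0]; exact bot_le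
    · rw [es, es]; exact Subgroup.comap_mono (hle i)
  · rintro (_ | i) hi
    · rw [c0]; exact hN
    · rw [cs]; exact hf i (by omega)
  · rw [Finset.card_filter] at hcard ⊢
    rw [Finset.sum_range_succ', c0]
    simp only [cs]
    omega

/-- The Hall-Higman lemma. -/
lemma hallHigman {p : ℕ} (hp : p.Prime) {G : Type*} [Group G] [Finite G]
    (hG : IsPSoluble p G)
    (hR : ∀ N : Subgroup G, N.Normal → ¬ p ∣ Nat.card N → N = ⊥)
    (T : Subgroup G) [hTn : T.Normal] (hT : IsPGroup p T)
    (hTmax : ∀ N : Subgroup G, N.Normal → IsPGroup p N → N ≤ T) :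
    Subgroup.centralizer (T : Set G) ≤ T := by
  have := Fact.mk hp
  obtain ⟨k, H, h0, hk, hn, hle, hf⟩ := hG
  set C := Subgroup.centralizer (T : Set G) with hC
  have hCn : C.Normal := inferInstance
  have key : ∀ i ≤ k, C ⊓ H i ≤ T := by
    intro i
    induction i with
    | zero => intro _; rw [h0, inf_bot_eq]; exact bot_le
    | succ i ih =>
      intro hi
      have hA := ih (by omega)
      set A := C ⊓ H i with hAdef
      set D := C ⊓ H (i + 1) with hDdef
      have := hn i
      have := hn (i + 1)
      have hDn : D.Normal := inferInstance
      have hAD : A ≤ D := inf_le_inf_left _ (hle i)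
      have hrel : A.relIndex D ∣ (H i).relIndex (H (i + 1)) := by
        have e : A = H i ⊓ D := by
          rw [hAdef, hDdef, inf_left_comm, inf_eq_left.2 (hle i)]
        rw [e, Subgroup.inf_relIndex_right, ← Subgroup.relIndex_sup_right]
        exact ⟨_, (Subgroup.relIndex_mul_relIndex (H i) (D ⊔ H i) (H (i + 1)) le_sup_right
          (sup_le inf_le_right (hle i))).symm⟩
      have hcard : Nat.card A * A.relIndex D = Nat.card D := by
        rw [← Subgroup.relIndex_bot_left, ← Subgroup.relIndex_bot_left,
          Subgroup.relIndex_mul_relIndex _ _ _ bot_le hAD]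
      have hAp : IsPGroup p A := hT.to_le hA
      rcases factor_dvd hp hrel (hf i (by omega)) with ⟨j, hj⟩ | hnd
      · apply hTmax _ hDn
        obtain ⟨l, hl⟩ := IsPGroup.iff_card.1 hAp
        rw [IsPGroup.iff_card]
        exact ⟨l + j, by rw [← hcard, hl, hj, pow_add]⟩
      · set j := A.relIndex D with hjdef
        have hAc : A.subgroupOf D ≤ Subgroup.center D := by
          intro a ha
          rw [Subgroup.mem_center_iff]
          intro d
          apply Subtype.ext
          have hd : d.1 ∈ C := d.2.1
          exact (Subgroup.mem_centralizer_iff.1 hd a.1 (hA (Subgroup.mem_subgroupOf.1 ha))).symm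
        obtain ⟨l, hl⟩ : (Subgroup.center D).index ∣ j := Subgroup.index_dvd_of_le hAc
        let σ : D →* Subgroup.center D :=
          MonoidHom.mk' (fun d => (MonoidHom.transferCenterPow D) d ^ l) (fun a b => by
            rw [map_mul]
            exact Commute.mul_pow (Subtype.ext
              (Subgroup.mem_center_iff.1 ((MonoidHom.transferCenterPow D) b).2 _)) l)
        have hσ : ∀ d : D, ((σ d : D) : G) = (d : G) ^ j := by
          intro d
          change ((((MonoidHom.transferCenterPow D) d : Subgroup.center D) ^ l : Subgroup.center D) : D).1 = _
          rw [SubgroupClass.coe_pow, MonoidHom.transferCenterPow_apply, ← pow_mul, ← hl]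
          rfl
        let K : Subgroup G := σ.ker.map D.subtype
        have hKmem : ∀ x : G, x ∈ K ↔ x ∈ D ∧ x ^ j = 1 := by
          intro x
          constructor
          · rintro ⟨d, hd, rfl⟩
            refine ⟨d.2, ?_⟩
            have := hσ d
            rw [MonoidHom.mem_ker.1 hd] at this
            exact this.symm
          · rintro ⟨hx, hxj⟩
            refine ⟨⟨x, hx⟩, ?_, rfl⟩
            rw [SetLike.mem_coe, MonoidHom.mem_ker]
            apply Subtype.ext
            apply Subtype.ext
            rw [hσ]
            exact hxj
        have hKn : K.Normal := by
          refine ⟨fun x hx g => ?_⟩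
          rw [hKmem] at hx ⊢
          refine ⟨hDn.conj_mem x hx.1 g, ?_⟩
          rw [conj_pow, hx.2, mul_one, mul_inv_cancel]
        have hKp : ¬ p ∣ Nat.card K := by
          intro hd
          obtain ⟨x, hx⟩ := exists_prime_orderOf_dvd_card' p hd
          have h1 : x ^ j = 1 := Subtype.ext ((hKmem x.1).1 x.2).2
          exact hnd (hx ▸ orderOf_dvd_of_pow_eq_one h1)
        have hKb := hR K hKn hKp
        have hinj : ∀ x y : D, x.1 ^ j = y.1 ^ j → x = y := by
          intro x y hxy
          have : σ x = σ y := by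
            apply Subtype.ext
            apply Subtype.ext
            rw [hσ, hσ, hxy]
          have hm : x * y⁻¹ ∈ σ.ker := by
            rw [MonoidHom.mem_ker, map_mul, map_inv, this, mul_inv_cancel]
          have hm' : (x * y⁻¹).1 ∈ K := ⟨_, hm, rfl⟩
          rw [hKb, Subgroup.mem_bot] at hm'
          exact mul_inv_eq_one.1 (Subtype.ext hm')
        have hAn : (A.subgroupOf D).Normal := inferInstance
        have hmem : ∀ x : D, x.1 ^ j ∈ A := by
          intro x
          have := (A.subgroupOf D).pow_index_mem x
          exact this
        have hle' : Nat.card D ≤ Nat.card A :=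
          Nat.card_le_card_of_injective (fun x : D => (⟨x.1 ^ j, hmem x⟩ : A))
            (fun x y hxy => hinj x y (congrArg Subtype.val hxy))
        have : A = D := Subgroup.eq_of_le_of_card_ge hAD hle'
        rw [← this]
        exact hA
  have := key k le_rfl
  rwa [hk, inf_top_eq] at this

/-- The p-length of `G` is bounded in terms of the Frattini quotient. -/
lemma pLength_of_frattini_bound {p : ℕ} (hp : p.Prime) {G : Type*} [Group G] [Finite G]
    (hG : IsPSoluble p G)
    (hR : ∀ N : Subgroup G, N.Normal → ¬ p ∣ Nat.card N → N = ⊥)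
    (T : Subgroup G) [hTn : T.Normal] (hT : IsPGroup p T)
    (hTmax : ∀ N : Subgroup G, N.Normal → IsPGroup p N → N ≤ T)
    {B : ℕ} (hB : Nat.card (T ⧸ frattini T) ≤ B) :
    PLengthLE p G (B ^ B + 1) := by
  have := Fact.mk hp
  let ρ : G →* Monoid.End (T ⧸ frattini T) :=
    (frattiniAction T).comp (MulAut.conjNormal (H := T))
  have hker : (MulAut.conjNormal (H := T)).ker ≤ T := by
    refine le_trans ?_ (hallHigman hp hG hR T hT hTmax)
    intro g hg
    rw [Subgroup.mem_centralizer_iff]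
    intro t ht
    have := congrArg Subtype.val (DFunLike.congr_fun (MonoidHom.mem_ker.1 hg) (⟨t, ht⟩ : T))
    rw [MulAut.conjNormal_apply] at this
    have h' : g * t * g⁻¹ = t := this
    calc t * g = (g * t * g⁻¹) * g := by rw [h']
      _ = g * t := by group
  have hK : IsPGroup p ρ.ker :=
    (frattiniAction_ker hT).comap_of_ker_isPGroup (MulAut.conjNormal (H := T)) (hT.to_le hker)
  have hQ : Nat.card (G ⧸ ρ.ker) ≤ B ^ B := by
    let F : G ⧸ ρ.ker → ((T ⧸ frattini T) → (T ⧸ frattini T)) := fun x => ρ x.out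
    have hF : Function.Injective F := by
      intro x y hxy
      have e : ρ x.out = ρ y.out := DFunLike.coe_injective hxy
      rw [← QuotientGroup.out_eq' x, ← QuotientGroup.out_eq' y, QuotientGroup.eq,
        MonoidHom.mem_ker, map_mul, ← e, ← map_mul, inv_mul_cancel, map_one]
    refine (Nat.card_le_card_of_injective F hF).trans ?_
    rw [Nat.card_fun]
    exact (Nat.pow_le_pow_left hB _).trans
      (Nat.pow_le_pow_right (Nat.card_pos.trans_le hB) hB)
  have h1 := ((hG.quotient hp ρ.ker).pLengthLE_card hp).of_quotient ρ.ker
    (Or.inl (IsPGroup.iff_card.1 hK))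
  refine h1.mono ?_
  split_ifs <;> omega

lemma pLength_main {p n m : ℕ} (hp : p.Prime) {G : Type*} [Group G] [Finite G]
    (hG : IsPSoluble p G) (φ : MulAut G) (hφ : orderOf φ = p ^ n) (P : Sylow p G)
    (hP : (P : Subgroup G).map φ.toMonoidHom = (P : Subgroup G))
    (hfix : Nat.card {x : G // x ∈ (P : Subgroup G) ∧ φ x = x} = p ^ m) :
    PLengthLE p G (((p ^ m) ^ (p ^ n)) ^ ((p ^ m) ^ (p ^ n)) + 1) := by
  have := Fact.mk hp
  -- the largest normal subgroup of order prime to p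
  obtain ⟨R, ⟨hRn, hRp⟩, hRmax⟩ : ∃ R : Subgroup G, (R.Normal ∧ ¬ p ∣ Nat.card R) ∧
      ∀ N : Subgroup G, N.Normal → ¬ p ∣ Nat.card N → N ≤ R := by
    obtain ⟨R, hR, hmax⟩ := Set.Finite.exists_maximal
      (Set.toFinite {N : Subgroup G | N.Normal ∧ ¬ p ∣ Nat.card N})
      ⟨⊥, inferInstance, by rw [Subgroup.card_bot]; exact hp.one_lt.ne' ∘ Nat.dvd_one.1⟩
    refine ⟨R, hR, fun N hN hNp => ?_⟩
    have := hR.1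
    have h2 : (N ⊔ R).Normal ∧ ¬ p ∣ Nat.card (N ⊔ R : Subgroup G) := by
      refine ⟨inferInstance, ?_⟩
      have hc : Nat.card R * R.relIndex (N ⊔ R) = Nat.card (N ⊔ R : Subgroup G) := by
        rw [← Subgroup.relIndex_bot_left, ← Subgroup.relIndex_bot_left,
          Subgroup.relIndex_mul_relIndex _ _ _ bot_le le_sup_right]
      rw [← hc, Subgroup.relIndex_sup_right, hp.dvd_mul]
      rintro (h | h)
      · exact hR.2 h
      · exact hNp (h.trans (Subgroup.relIndex_dvd_card _ _))
    exact le_sup_left.trans (hmax h2 le_sup_right)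
  have hRφ : R.map φ.toMonoidHom = R := by
    refine Subgroup.eq_of_le_of_card_ge (hRmax _ (hRn.map _ φ.surjective) ?_) ?_
    · rwa [Subgroup.card_map_of_injective φ.injective]
    · rw [Subgroup.card_map_of_injective φ.injective]
  -- the quotient and its automorphism
  let π := QuotientGroup.mk' R
  have hπ : Function.Surjective π := QuotientGroup.mk'_surjective R
  let e : G ⧸ R ≃* G ⧸ R := QuotientGroup.congr R R φ hRφ
  have he : ∀ x, e (π x) = π (φ x) := fun x => rfl
  have hQR : ∀ N : Subgroup (G ⧸ R), N.Normal → ¬ p ∣ Nat.card N → N = ⊥ := by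
    intro N hN hNp
    have hRk : R = (⊥ : Subgroup (G ⧸ R)).comap π := by
      rw [MonoidHom.comap_bot, QuotientGroup.ker_mk']
    have hc : Nat.card (N.comap π) = Nat.card R * Nat.card N := by
      have h1 := Subgroup.relIndex_mul_relIndex ⊥ R (N.comap π) bot_le
        (hRk.le.trans (Subgroup.comap_mono bot_le))
      rw [Subgroup.relIndex_bot_left, Subgroup.relIndex_bot_left] at h1
      rw [← h1]
      congr 1
      refine (congrArg (fun X : Subgroup G => X.relIndex (N.comap π)) hRk).trans ?_
      rw [Subgroup.relIndex_comap, Subgroup.map_comap_eq_self_of_surjective hπ,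
        Subgroup.relIndex_bot_left]
    have hle : N.comap π ≤ R := hRmax _ (hN.comap π) (by
      rw [hc, hp.dvd_mul]
      rintro (h | h)
      · exact hRp h
      · exact hNp h)
    rw [eq_bot_iff]
    intro x hx
    obtain ⟨y, rfl⟩ := hπ x
    exact (QuotientGroup.eq_one_iff y).2 (hle hx)
  -- the largest normal `p`-subgroup of the quotient
  let P' : Sylow p (G ⧸ R) := P.mapSurjective hπ
  have hP' : (P' : Subgroup (G ⧸ R)) = (P : Subgroup G).map π := rfl
  let T : Subgroup (G ⧸ R) := (P' : Subgroup (G ⧸ R)).normalCore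
  have hTn : T.Normal := Subgroup.normalCore_normal _
  have hTP : T ≤ (P' : Subgroup (G ⧸ R)) := Subgroup.normalCore_le _
  have hT : IsPGroup p T := P'.isPGroup'.to_le hTP
  have hTmax : ∀ N : Subgroup (G ⧸ R), N.Normal → IsPGroup p N → N ≤ T := by
    intro N hN hNp
    refine Subgroup.normal_le_normalCore.2 ?_
    have := P'.is_maximal' (P'.isPGroup'.to_sup_of_normal_right hNp) le_sup_left
    rw [← this]
    exact le_sup_right
  have hTe : T.map e.toMonoidHom = T := by
    refine Subgroup.eq_of_le_of_card_ge (hTmax _ (hTn.map _ e.surjective) (hT.map _)) ?_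
    exact (Subgroup.card_map_of_injective (f := e.toMonoidHom) e.injective).ge
  let eT : MulAut T := (e.subgroupMap T).trans (MulEquiv.subgroupCongr hTe)
  have heT : ∀ t, ((eT t : T) : G ⧸ R) = e t := fun t => rfl
  let β : (T ⧸ frattini T) →* (T ⧸ frattini T) := frattiniAction T eT
  have hβ : ∀ t : T, β (t : T ⧸ frattini T) = ((eT t : T) : T ⧸ frattini T) := fun t => rfl
  -- the part of `P` covering `T`
  let P0 : Subgroup G := (P : Subgroup G) ⊓ T.comap π
  have hP0 : ∀ x : P0, φ x.1 ∈ P0 := by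
    intro x
    refine ⟨?_, ?_⟩
    · have : φ x.1 ∈ (P : Subgroup G).map φ.toMonoidHom := ⟨x.1, x.2.1, rfl⟩
      rw [hP] at this
      exact this
    · have : e (π x.1) ∈ T.map e.toMonoidHom := ⟨π x.1, x.2.2, rfl⟩
      rw [hTe] at this
      exact this
  let α : P0 →* P0 := (φ.toMonoidHom.comp P0.subtype).codRestrict P0 hP0
  have hα : ∀ x : P0, ((α x : P0) : G) = φ x := fun x => rfl
  let f0 : P0 →* T := (π.comp P0.subtype).codRestrict T (fun x => x.2.2)
  let f : P0 →* (T ⧸ frattini T) := (QuotientGroup.mk' (frattini T)).comp f0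
  have hf0 : Function.Surjective f0 := by
    intro t
    have ht : t.1 ∈ (P : Subgroup G).map π := hTP t.2
    obtain ⟨x, hx, hxt⟩ := ht
    refine ⟨⟨x, hx, ?_⟩, Subtype.ext hxt⟩
    change π x ∈ T
    rw [hxt]
    exact t.2
  have hf : Function.Surjective f := (QuotientGroup.mk'_surjective _).comp hf0
  have hfe : ∀ x, f (α x) = β (f x) := fun x => rfl
  have hcard1 := card_fixed_le_of_surjective f hf α β hfe
  have hcard2 : Nat.card {x : P0 // α x = x} ≤ p ^ m := by
    rw [← hfix]
    refine Nat.card_le_card_of_injective (fun x => ⟨x.1.1, x.1.2.1, ?_⟩) ?_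
    · exact congrArg Subtype.val x.2
    · intro x y hxy
      have hxy' : x.1.1 = y.1.1 := congrArg (fun z => z.1) hxy
      exact Subtype.ext (Subtype.ext hxy')
  have hβn : ∀ v, β^[p ^ n] v = v := by
    intro v
    obtain ⟨x, rfl⟩ := hf v
    have s1 : f (α^[p ^ n] x) = β^[p ^ n] (f x) :=
      (Function.Semiconj.iterate_right (f := f) (ga := α) (gb := β) hfe (p ^ n)) x
    have s2 : ((α^[p ^ n] x : P0) : G) = φ^[p ^ n] x.1 :=
      (Function.Semiconj.iterate_right (f := fun x : P0 => (x : G)) (ga := α) (gb := φ)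
        hα (p ^ n)) x
    have s3 : φ^[p ^ n] x.1 = x.1 := by
      have : ∀ (k : ℕ) (y : G), φ^[k] y = (φ ^ k) y := by
        intro k
        induction k with
        | zero => intro y; rfl
        | succ k ih =>
          intro y
          rw [Function.iterate_succ_apply, ih, pow_succ]
          rfl
      rw [this, ← hφ, pow_orderOf_eq_one]
      rfl
    rw [← s1]
    exact congrArg f (Subtype.ext (s2.trans s3))
  have hcomm : ∀ a b : T ⧸ frattini T, a * b = b * a := by
    intro a b
    induction a using QuotientGroup.induction_on with | _ a => ?_
    induction b using QuotientGroup.induction_on with | _ b => ?_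
    rw [← QuotientGroup.mk_mul, ← QuotientGroup.mk_mul, QuotientGroup.eq]
    exact mem_frattini fun M hM => (coatom_facts hT M hM).1 a b
  have hexp : ∀ a : T ⧸ frattini T, a ^ p = 1 := by
    intro a
    induction a using QuotientGroup.induction_on with | _ a => ?_
    rw [← QuotientGroup.mk_pow, QuotientGroup.eq_one_iff]
    exact mem_frattini fun M hM => (coatom_facts hT M hM).2 a
  have hB : Nat.card (T ⧸ frattini T) ≤ (p ^ m) ^ (p ^ n) :=
    (card_le_fixed_pow hp hcomm hexp β hβn).trans
      (Nat.pow_le_pow_left (hcard1.trans hcard2) _)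
  have h1 := (pLength_of_frattini_bound hp (hG.quotient hp R) hQR T hT hTmax hB).of_quotient R
    (Or.inr hRp)
  rwa [if_neg hRp, add_zero] at h1

end Helpers

theorem pLength_bounded_of_few_fixed_points_in_sylow :
    ∃ f : ℕ × ℕ × ℕ → ℕ, ∀ (p n m : ℕ), p.Prime →
      ∀ (G : Type) [Group G] [Finite G], IsPSoluble p G →
        ∀ φ : MulAut G, orderOf φ = p ^ n →
          ∀ P : Sylow p G, (P : Subgroup G).map φ.toMonoidHom = (P : Subgroup G) →
            Nat.card {x : G // x ∈ (P : Subgroup G) ∧ φ x = x} = p ^ m →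
            PLengthLE p G (f (p, n, m)) := by

  refine ⟨fun x => ((x.1 ^ x.2.2) ^ (x.1 ^ x.2.1)) ^ ((x.1 ^ x.2.2) ^ (x.1 ^ x.2.1)) + 1, ?_⟩
  intro p n m hp G _ _ hG φ hφ P hP hfix
  exact pLength_main hp hG φ hφ P hP hfix
end
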